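/- Let N be the normalizer of the split Cartan subgroup of GL₂(F₃), i.e., the subgroup consisting of all invertible matrices of the form [[x, 0], [0, y]] or [[0, x], [y, 0]] with x, y ∈ F₃^×. Then the subgroup of N generated by the set {g ∈ N : det(g - I) ≠ 0} is exactly {g ∈ N : det(g) = 1}; this subgroup is cyclic of order 4, generated by the matrix [[0, 1], [-1, 0]], and is normal in N. -/

import Mathlib

/-!
A monomial matrix in `GL₂` is diagonal or antidiagonal, and its two nonzero entries are units.
If the only units are `±1`, the monomial matrices of determinant `1` are `±I` and `±w` with
`w = [[0, 1], [-1, 0]]`; as `w² = -I`, they form the cyclic group generated by `w`.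
If `det (g - I) = (x - 1) (y - 1)` is nonzero for `g = diag(x, y)`, then `x = y = -1`; if
`det (g - I) = 1 - x y` is nonzero for `g` antidiagonal, then `x y = -1`. In both cases
`det g = 1`. Conversely `det (w - I) = 2`, so `w` is among the generators as soon as `2 ≠ 0`.
-/

open Matrix

lemma conj_mem_inf_ker {G H : Type*} [Group G] [Group H] {N : Subgroup G} {f : G →* H} {b g : G}
    (hb : b ∈ N) (hg : g ∈ N ⊓ f.ker) : b * g * b⁻¹ ∈ N ⊓ f.ker :=
  ⟨mul_mem (mul_mem hb hg.1) (N.inv_mem hb), f.normal_ker.conj_mem g hg.2 b⟩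

variable {R : Type*} [CommRing R]

variable (R) in
/-- The subgroup of `GL₂(R)` of monomial matrices, i.e. of the diagonal and the antidiagonal ones:
the normalizer of the split Cartan subgroup when `R` is a field with more than two elements. -/
def monomialSubgroup : Subgroup (GL (Fin 2) R) where
  carrier := {g | (g.val 0 1 = 0 ∧ g.val 1 0 = 0) ∨ (g.val 0 0 = 0 ∧ g.val 1 1 = 0)}
  one_mem' := by simp
  mul_mem' := by
    rintro g h (⟨hg, hg'⟩ | ⟨hg, hg'⟩) (⟨hh, hh'⟩ | ⟨hh, hh'⟩) <;>
      simp [mul_apply, Fin.sum_univ_two, hg, hg', hh, hh']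
  inv_mem' := by
    rintro g (⟨hg, hg'⟩ | ⟨hg, hg'⟩) <;>
      simp [coe_units_inv, inv_def, adjugate_fin_two, hg, hg']

variable (R) in
/-- The matrix `w = [[0, 1], [-1, 0]]`, which represents the nontrivial element of the Weyl group
of the split Cartan subgroup. -/
def weylElement : GL (Fin 2) R where
  val := !![0, 1; -1, 0]
  inv := !![0, -1; 1, 0]
  val_inv := by simp [one_fin_two]
  inv_val := by simp [one_fin_two]

lemma weylElement_sq : weylElement R ^ 2 = -1 := by
  ext i j
  fin_cases i <;> fin_cases j <;> simp [weylElement, sq]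

lemma orderOf_weylElement (h2 : (2 : R) ≠ 0) : orderOf (weylElement R) = 4 := by
  have sq_ne_one : weylElement R ^ 2 ^ 1 ≠ 1 := by
    rw [pow_one, weylElement_sq]
    intro h
    have h00 : (-1 : R) = 1 := by simpa using congr_arg (fun g : GL (Fin 2) R => g.val 0 0) h
    exact h2 (by linear_combination -h00)
  have pow_four : weylElement R ^ 2 ^ (1 + 1) = 1 := by
    rw [pow_succ, pow_one, pow_mul, weylElement_sq, neg_one_sq]
  exact orderOf_eq_prime_pow sq_ne_one pow_four

lemma weylElement_mem_monomialSubgroup : weylElement R ∈ monomialSubgroup R :=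
  Or.inr ⟨rfl, rfl⟩

lemma det_weylElement : (weylElement R).val.det = 1 := by
  simp [weylElement]

lemma det_weylElement_sub_one : ((weylElement R).val - 1).det = 2 := by
  simp [weylElement, det_fin_two, one_add_one_eq_two]

lemma mem_monomialSubgroup_inf_ker_det {g : GL (Fin 2) R} :
    g ∈ monomialSubgroup R ⊓ GeneralLinearGroup.det.ker ↔
      g ∈ monomialSubgroup R ∧ g.val.det = 1 := by
  rw [Subgroup.mem_inf, MonoidHom.mem_ker, Units.ext_iff, GeneralLinearGroup.val_det_apply,
    Units.val_one]

lemma eq_one_or_neg_one_or_weylElement (hR : ∀ a : R, IsUnit a → a = 1 ∨ a = -1)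
    {g : GL (Fin 2) R} (hg : g ∈ monomialSubgroup R) (hdet : g.val.det = 1) :
    g = 1 ∨ g = -1 ∨ g = weylElement R ∨ g = -weylElement R := by
  rw [det_fin_two] at hdet
  rcases hg with ⟨h01, h10⟩ | ⟨h00, h11⟩
  · have hprod : g.val 0 0 * g.val 1 1 = 1 := by linear_combination hdet + g.val 1 0 * h01
    rcases hR _ (IsUnit.of_mul_eq_one _ hprod) with h00 | h00
    · have h11 : g.val 1 1 = 1 := by linear_combination hprod - g.val 1 1 * h00
      left
      ext i j
      fin_cases i <;> fin_cases j <;> simp [h00, h01, h10, h11]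
    · have h11 : g.val 1 1 = -1 := by linear_combination -hprod + g.val 1 1 * h00
      right; left
      ext i j
      fin_cases i <;> fin_cases j <;> simp [h00, h01, h10, h11]
  · have hprod : g.val 0 1 * -g.val 1 0 = 1 := by linear_combination hdet - g.val 1 1 * h00
    rcases hR _ (IsUnit.of_mul_eq_one _ hprod) with h01 | h01
    · have h10 : g.val 1 0 = -1 := by linear_combination -hprod - g.val 1 0 * h01
      right; right; left
      ext i j
      fin_cases i <;> fin_cases j <;> simp [weylElement, h00, h01, h10, h11]
    · have h10 : g.val 1 0 = 1 := by linear_combination hprod + g.val 1 0 * h01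
      right; right; right
      ext i j
      fin_cases i <;> fin_cases j <;> simp [weylElement, h00, h01, h10, h11]

lemma zpowers_weylElement (hR : ∀ a : R, IsUnit a → a = 1 ∨ a = -1) :
    Subgroup.zpowers (weylElement R) = monomialSubgroup R ⊓ GeneralLinearGroup.det.ker := by
  apply le_antisymm
  · rw [Subgroup.zpowers_le]
    exact mem_monomialSubgroup_inf_ker_det.2 ⟨weylElement_mem_monomialSubgroup, det_weylElement⟩
  · intro g hg
    obtain ⟨hmon, hdet⟩ := mem_monomialSubgroup_inf_ker_det.1 hg
    have w_mem := Subgroup.mem_zpowers (weylElement R)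
    have neg_one_mem : -1 ∈ Subgroup.zpowers (weylElement R) :=
      weylElement_sq (R := R) ▸ pow_mem w_mem 2
    rcases eq_one_or_neg_one_or_weylElement hR hmon hdet with rfl | rfl | rfl | rfl
    · exact one_mem _
    · exact neg_one_mem
    · exact w_mem
    · exact neg_one_mul (weylElement R) ▸ mul_mem neg_one_mem w_mem

lemma det_eq_one_of_det_sub_one_ne_zero (hR : ∀ a : R, IsUnit a → a = 1 ∨ a = -1)
    {g : GL (Fin 2) R} (hg : g ∈ monomialSubgroup R) (hsub : (g.val - 1).det ≠ 0) :
    g.val.det = 1 := by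
  have hdet : IsUnit g.val.det := (isUnit_iff_isUnit_det _).1 g.isUnit
  rcases hg with ⟨h01, h10⟩ | ⟨h00, h11⟩
  · have det_eq : g.val.det = g.val 0 0 * g.val 1 1 := by simp [det_fin_two, h01]
    have det_sub_eq : (g.val - 1).det = (g.val 0 0 - 1) * (g.val 1 1 - 1) := by
      simp [det_fin_two, h01]
    rw [det_eq] at hdet ⊢
    rw [det_sub_eq] at hsub
    have h00 : g.val 0 0 = -1 := (hR _ (isUnit_of_mul_isUnit_left hdet)).resolve_left
      fun h => left_ne_zero_of_mul hsub (sub_eq_zero.2 h)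
    have h11 : g.val 1 1 = -1 := (hR _ (isUnit_of_mul_isUnit_right hdet)).resolve_left
      fun h => right_ne_zero_of_mul hsub (sub_eq_zero.2 h)
    rw [h00, h11, neg_mul_neg, one_mul]
  · have det_sub_eq : (g.val - 1).det = g.val.det + 1 := by
      simp [det_fin_two, h00, h11, neg_add_eq_sub]
    exact (hR _ hdet).resolve_right fun h => hsub (by rw [det_sub_eq, h, neg_add_cancel])

lemma closure_det_sub_one_ne_zero (hR : ∀ a : R, IsUnit a → a = 1 ∨ a = -1) (h2 : (2 : R) ≠ 0) :
    Subgroup.closure {g : GL (Fin 2) R | g ∈ monomialSubgroup R ∧ (g.val - 1).det ≠ 0} =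
      Subgroup.zpowers (weylElement R) := by
  apply le_antisymm
  · rw [Subgroup.closure_le, zpowers_weylElement hR]
    rintro g ⟨hmon, hsub⟩
    exact mem_monomialSubgroup_inf_ker_det.2
      ⟨hmon, det_eq_one_of_det_sub_one_ne_zero hR hmon hsub⟩
  · rw [Subgroup.zpowers_le]
    exact Subgroup.subset_closure
      ⟨weylElement_mem_monomialSubgroup, det_weylElement_sub_one.trans_ne h2⟩

theorem stmt10_general (hR : ∀ a : R, IsUnit a → a = 1 ∨ a = -1) (h2 : (2 : R) ≠ 0)
    (K : Subgroup (GL (Fin 2) R))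
    (hK : K = Subgroup.closure {g | g ∈ monomialSubgroup R ∧ (g.val - 1).det ≠ 0}) :
    (∀ g, g ∈ K ↔ g ∈ monomialSubgroup R ∧ g.val.det = 1) ∧
    (∃ z : GL (Fin 2) R, z.val = !![0, 1; -1, 0] ∧ K = Subgroup.zpowers z) ∧
    Nat.card K = 4 ∧
    (∀ b g, b ∈ monomialSubgroup R → g ∈ K → b * g * b⁻¹ ∈ K) := by
  have hzpowers : K = Subgroup.zpowers (weylElement R) :=
    hK.trans (closure_det_sub_one_ne_zero hR h2)
  have hinf : K = monomialSubgroup R ⊓ GeneralLinearGroup.det.ker :=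
    hzpowers.trans (zpowers_weylElement hR)
  refine ⟨fun g => ?_, ⟨weylElement R, rfl, hzpowers⟩, ?_, fun b g hb hg => ?_⟩
  · rw [hinf, mem_monomialSubgroup_inf_ker_det]
  · rw [hzpowers, Nat.card_zpowers, orderOf_weylElement h2]
  · rw [hinf] at hg ⊢
    exact conj_mem_inf_ker hb hg

/-- In the normalizer `N` of the split Cartan subgroup of `GL₂(F₃)` (the
monomial matrices), the subgroup generated by `{g ∈ N : det (g - I) ≠ 0}` is
exactly `{g ∈ N : det g = 1}`; it is cyclic of order `4`, generated by
`[[0, 1], [-1, 0]]`, and normal in `N`. -/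
theorem stmt10 (K : Subgroup (GL (Fin 2) (ZMod 3)))
    (hK : K = Subgroup.closure {h : GL (Fin 2) (ZMod 3) |
      (((h : Matrix (Fin 2) (Fin 2) (ZMod 3)) 0 1 = 0 ∧
          (h : Matrix (Fin 2) (Fin 2) (ZMod 3)) 1 0 = 0) ∨
        ((h : Matrix (Fin 2) (Fin 2) (ZMod 3)) 0 0 = 0 ∧
          (h : Matrix (Fin 2) (Fin 2) (ZMod 3)) 1 1 = 0)) ∧
      Matrix.det ((h : Matrix (Fin 2) (Fin 2) (ZMod 3)) - 1) ≠ 0}) :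
    (∀ g : GL (Fin 2) (ZMod 3),
      g ∈ K ↔ ((((g : Matrix (Fin 2) (Fin 2) (ZMod 3)) 0 1 = 0 ∧
          (g : Matrix (Fin 2) (Fin 2) (ZMod 3)) 1 0 = 0) ∨
        ((g : Matrix (Fin 2) (Fin 2) (ZMod 3)) 0 0 = 0 ∧
          (g : Matrix (Fin 2) (Fin 2) (ZMod 3)) 1 1 = 0)) ∧
        Matrix.det (g : Matrix (Fin 2) (Fin 2) (ZMod 3)) = 1)) ∧
    (∃ z : GL (Fin 2) (ZMod 3),
      (z : Matrix (Fin 2) (Fin 2) (ZMod 3)) = !![0, 1; -1, 0] ∧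
      K = Subgroup.zpowers z) ∧
    Nat.card K = 4 ∧
    (∀ b g : GL (Fin 2) (ZMod 3),
      (((b : Matrix (Fin 2) (Fin 2) (ZMod 3)) 0 1 = 0 ∧
          (b : Matrix (Fin 2) (Fin 2) (ZMod 3)) 1 0 = 0) ∨
        ((b : Matrix (Fin 2) (Fin 2) (ZMod 3)) 0 0 = 0 ∧
          (b : Matrix (Fin 2) (Fin 2) (ZMod 3)) 1 1 = 0)) →
      g ∈ K → b * g * b⁻¹ ∈ K) :=
  stmt10_general (by decide) (by decide) K hK
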